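/- Let Θ ⊆ ℝ^d be convex, f₁, …, f_n : ℝ^d → ℝ convex and differentiable, θ₁ ∈ Θ, α_t > 0 for t = 1, …, T. For each t and each history (i₁,…,i_{t−1}) ∈ {1,…,n}^{t−1}, let p_t(·; i₁,…,i_{t−1}) be a probability vector with all entries positive, let w^t_i = 1/(n p_t(i)), and define θ_{t+1}(i₁,…,i_t) ∈ Θ as a Euclidean projection of θ_t − α_t w^t_{i_t} ∇f_{i_t}(θ_t) onto Θ. Assign to each partial trajectory (i₁,…,i_t) the probability P(i₁,…,i_t) = Π_{τ=1}^t p_τ(i_τ; i₁,…,i_{τ−1}), and write E for expectation under these trajectory probabilities. Then for every θ* ∈ Θ, with f = (1/n) Σ_i f_i: Σ_{t=1}^T E[ f(θ_t) − f(θ*) ] ≤ Σ_{t=1}^T (α_t/2) E[ (w^t_{i_t})² ‖∇f_{i_t}(θ_t)‖₂² ] + Σ_{t=1}^T (1/(2α_t)) ( E[‖θ_t − θ*‖₂²] − E[‖θ_{t+1} − θ*‖₂²] ). -/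

import Mathlib

/-- Probability of the partial trajectory `s = (i₁, …, i_t)` under the history-dependent
sampling distributions `p`: `P(i₁,…,i_t) = Π_{τ=1}^t p_τ(i_τ; i₁,…,i_{τ−1})`. -/
def trajProb {n : ℕ} (p : (t : ℕ) → (Fin t → Fin n) → Fin n → ℝ) :
    (t : ℕ) → (Fin t → Fin n) → ℝ
  | 0, _ => 1
  | t + 1, s => trajProb p t (Fin.init s) * p t (Fin.init s) (s (Fin.last t))

/-!
Projecting onto a convex set never moves a point away from an element of that set, so expanding
`‖x - (a * w) • g - y‖ ^ 2` bounds `w * ⟪g, x - y⟫` by a gradient-size term plus the decrease of the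
squared distance to `y`. Averaged over the sampled index, the importance weights `1 / (n * p i)`
cancel the sampling probabilities, whatever they are, which leaves the uniform mean of the inner
products; by convexity this dominates the instantaneous regret. Averaging over the history and
summing over the rounds gives the bound.
-/

section FirstOrderConvexity

variable {E : Type*} {s : Set E} {f : E → ℝ} {x y : E}

theorem add_le_of_convexOn_of_hasFDerivWithinAt [NormedAddCommGroup E] [NormedSpace ℝ E]
    {f' : E →L[ℝ] ℝ} (hf : ConvexOn ℝ s f) (hf' : HasFDerivWithinAt f f' s x) (hx : x ∈ s)
    (hy : y ∈ s) :
    f x + f' (y - x) ≤ f y := by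
  let γ : ℝ →ᵃ[ℝ] E := AffineMap.lineMap x y
  have hγ₀ : γ 0 = x := AffineMap.lineMap_apply_zero x y
  have hγ₁ : γ 1 = y := AffineMap.lineMap_apply_one x y
  have hderiv : HasDerivWithinAt (f ∘ γ) (f' (y - x)) (γ ⁻¹' s) 0 :=
    hf'.comp_hasDerivWithinAt_of_eq 0 AffineMap.hasDerivWithinAt_lineMap
      (Set.mapsTo_preimage γ s) hγ₀.symm
  have hslope := (hf.comp_affineMap γ).le_slope_of_hasDerivWithinAt
    (show γ 0 ∈ s from hγ₀ ▸ hx) (show γ 1 ∈ s from hγ₁ ▸ hy) one_pos hderiv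
  rw [slope_def_field, Function.comp_apply, Function.comp_apply, hγ₀, hγ₁] at hslope
  linarith

open scoped InnerProductSpace in
theorem sub_le_inner_of_convexOn_of_hasGradientWithinAt [NormedAddCommGroup E]
    [InnerProductSpace ℝ E] [CompleteSpace E] {f' : E} (hf : ConvexOn ℝ s f)
    (hf' : HasGradientWithinAt f f' s x) (hx : x ∈ s) (hy : y ∈ s) : f x - f y ≤ ⟪f', x - y⟫_ℝ := by
  have htangent := add_le_of_convexOn_of_hasFDerivWithinAt hf hf'.hasFDerivWithinAt hx hy
  rw [InnerProductSpace.toDual_apply_apply, ← neg_sub x y, inner_neg_right] at htangent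
  linarith

end FirstOrderConvexity

section ProjectedSubgradientStep

open scoped InnerProductSpace

variable {E : Type*} [NormedAddCommGroup E] [InnerProductSpace ℝ E] {K : Set E} {x y z : E}

theorem inner_sub_sub_nonpos_of_isMinOn_norm_sub {u : E} (hK : Convex ℝ K) (hu : u ∈ K)
    (hmin : IsMinOn (fun v => ‖v - z‖) K u) (hy : y ∈ K) : ⟪z - u, y - u⟫_ℝ ≤ 0 := by
  have : Nonempty K := ⟨⟨u, hu⟩⟩
  have hbdd : BddBelow (Set.range fun v : K => ‖z - v‖) :=
    ⟨0, Set.forall_mem_range.2 fun _ => norm_nonneg _⟩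
  have hinf : ‖z - u‖ = ⨅ v : K, ‖z - v‖ :=
    le_antisymm
      (le_ciInf fun v => by simpa only [norm_sub_rev z] using isMinOn_iff.1 hmin v v.2)
      (ciInf_le hbdd ⟨u, hu⟩)
  exact (norm_eq_iInf_iff_real_inner_le_zero hK hu).1 hinf y hy

theorem norm_sub_le_of_isMinOn_norm_sub {u : E} (hK : Convex ℝ K) (hu : u ∈ K)
    (hmin : IsMinOn (fun v => ‖v - z‖) K u) (hy : y ∈ K) : ‖u - y‖ ≤ ‖z - y‖ := by
  have hobtuse := inner_sub_sub_nonpos_of_isMinOn_norm_sub hK hu hmin hy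
  have hexpand := norm_sub_sq_real (z - u) (y - u)
  rw [sub_sub_sub_cancel_right, norm_sub_rev y u] at hexpand
  exact le_of_sq_le_sq (by linarith [sq_nonneg ‖z - u‖]) (norm_nonneg _)

theorem two_mul_inner_le_of_isMinOn_norm_sub {u g : E} {η : ℝ} (hK : Convex ℝ K) (hu : u ∈ K)
    (hmin : IsMinOn (fun v => ‖v - (x - η • g)‖) K u) (hy : y ∈ K) :
    2 * (η * ⟪g, x - y⟫_ℝ) ≤ η ^ 2 * ‖g‖ ^ 2 + (‖x - y‖ ^ 2 - ‖u - y‖ ^ 2) := by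
  have hcontract : ‖u - y‖ ^ 2 ≤ ‖x - η • g - y‖ ^ 2 :=
    pow_le_pow_left₀ (norm_nonneg _) (norm_sub_le_of_isMinOn_norm_sub hK hu hmin hy) 2
  have hexpand : ‖x - η • g - y‖ ^ 2 =
      ‖x - y‖ ^ 2 - 2 * (η * ⟪g, x - y⟫_ℝ) + η ^ 2 * ‖g‖ ^ 2 := by
    rw [sub_right_comm, norm_sub_sq_real, real_inner_smul_right, real_inner_comm, norm_smul,
      mul_pow, Real.norm_eq_abs, sq_abs]
  linarith

theorem mul_inner_le_of_isMinOn_norm_sub {u g : E} {a w : ℝ} (ha : 0 < a) (hK : Convex ℝ K)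
    (hu : u ∈ K) (hmin : IsMinOn (fun v => ‖v - (x - (a * w) • g)‖) K u) (hy : y ∈ K) :
    w * ⟪g, x - y⟫_ℝ ≤
      a / 2 * (w ^ 2 * ‖g‖ ^ 2) + 1 / (2 * a) * (‖x - y‖ ^ 2 - ‖u - y‖ ^ 2) := by
  have hstep := two_mul_inner_le_of_isMinOn_norm_sub hK hu hmin hy
  calc w * ⟪g, x - y⟫_ℝ = 1 / (2 * a) * (2 * (a * w * ⟪g, x - y⟫_ℝ)) := by field_simp
    _ ≤ 1 / (2 * a) * ((a * w) ^ 2 * ‖g‖ ^ 2 + (‖x - y‖ ^ 2 - ‖u - y‖ ^ 2)) := by gcongr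
    _ = a / 2 * (w ^ 2 * ‖g‖ ^ 2) + 1 / (2 * a) * (‖x - y‖ ^ 2 - ‖u - y‖ ^ 2) := by field_simp

theorem sum_mul_inner_le_of_isMinOn_norm_sub {ι : Type*} [Fintype ι] {p w : ι → ℝ} {g u : ι → E}
    {a : ℝ} (ha : 0 < a) (hp : ∀ i, 0 ≤ p i) (hp_sum : ∑ i, p i = 1) (hK : Convex ℝ K)
    (hu : ∀ i, u i ∈ K) (hmin : ∀ i, IsMinOn (fun v => ‖v - (x - (a * w i) • g i)‖) K (u i))
    (hy : y ∈ K) :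
    ∑ i, p i * (w i * ⟪g i, x - y⟫_ℝ) ≤
      a / 2 * ∑ i, p i * w i ^ 2 * ‖g i‖ ^ 2 +
        1 / (2 * a) * (‖x - y‖ ^ 2 - ∑ i, p i * ‖u i - y‖ ^ 2) :=
  calc ∑ i, p i * (w i * ⟪g i, x - y⟫_ℝ)
      ≤ ∑ i, p i * (a / 2 * (w i ^ 2 * ‖g i‖ ^ 2) +
          1 / (2 * a) * (‖x - y‖ ^ 2 - ‖u i - y‖ ^ 2)) :=
        Finset.sum_le_sum fun i _ => mul_le_mul_of_nonneg_left
          (mul_inner_le_of_isMinOn_norm_sub ha hK (hu i) (hmin i) hy) (hp i)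
    _ = a / 2 * ∑ i, p i * w i ^ 2 * ‖g i‖ ^ 2 +
          1 / (2 * a) * (∑ i, p i * ‖x - y‖ ^ 2 - ∑ i, p i * ‖u i - y‖ ^ 2) := by
        rw [← Finset.sum_sub_distrib, Finset.mul_sum, Finset.mul_sum, ← Finset.sum_add_distrib]
        exact Finset.sum_congr rfl fun i _ => by ring
    _ = _ := by rw [← Finset.sum_mul, hp_sum, one_mul]

theorem sum_mul_one_div_mul_mul {ι F : Type*} [Fintype ι] [Field F] {p : ι → F}
    (hp : ∀ i, p i ≠ 0) (c : F) (b : ι → F) :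
    ∑ i, p i * (1 / (c * p i) * b i) = 1 / c * ∑ i, b i := by
  rw [Finset.mul_sum]
  refine Finset.sum_congr rfl fun i _ => ?_
  rw [← mul_assoc, mul_one_div, div_mul_cancel_right₀ (hp i), one_div]

theorem regret_le_of_isMinOn_norm_sub {ι : Type*} [Fintype ι] {f : ι → E → ℝ} {p w : ι → ℝ}
    {g u : ι → E} {a c : ℝ} (ha : 0 < a) (hc : 0 ≤ c) (hp : ∀ i, 0 < p i) (hp_sum : ∑ i, p i = 1)
    (hw : ∀ i, w i = 1 / (c * p i)) (hg : ∀ i, f i x - f i y ≤ ⟪g i, x - y⟫_ℝ) (hK : Convex ℝ K)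
    (hu : ∀ i, u i ∈ K) (hmin : ∀ i, IsMinOn (fun v => ‖v - (x - (a * w i) • g i)‖) K (u i))
    (hy : y ∈ K) :
    1 / c * ∑ i, f i x - 1 / c * ∑ i, f i y ≤
      a / 2 * ∑ i, p i * w i ^ 2 * ‖g i‖ ^ 2 +
        1 / (2 * a) * (‖x - y‖ ^ 2 - ∑ i, p i * ‖u i - y‖ ^ 2) :=
  calc 1 / c * ∑ i, f i x - 1 / c * ∑ i, f i y
      = 1 / c * ∑ i, (f i x - f i y) := by rw [← mul_sub, ← Finset.sum_sub_distrib]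
    _ ≤ 1 / c * ∑ i, ⟪g i, x - y⟫_ℝ := by gcongr with i; exact hg i
    _ = ∑ i, p i * (w i * ⟪g i, x - y⟫_ℝ) := by
        simp only [hw, sum_mul_one_div_mul_mul fun i => (hp i).ne']
    _ ≤ _ := sum_mul_inner_le_of_isMinOn_norm_sub ha (fun i => (hp i).le) hp_sum hK hu hmin hy

end ProjectedSubgradientStep

theorem trajProb_nonneg {n : ℕ} {p : (t : ℕ) → (Fin t → Fin n) → Fin n → ℝ}
    (hp : ∀ t s i, 0 ≤ p t s i) : ∀ (t : ℕ) (s : Fin t → Fin n), 0 ≤ trajProb p t s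
  | 0, _ => zero_le_one
  | t + 1, s => mul_nonneg (trajProb_nonneg hp t (Fin.init s)) (hp _ _ _)

open scoped InnerProductSpace in
/-- Rounds are indexed by the length of the history, so `θ t` and `α t` are `θ_{t+1}` and `α_{t+1}`
in the paper's numbering. -/
theorem stmt_6_general {E : Type*} [NormedAddCommGroup E] [InnerProductSpace ℝ E] {n T : ℕ}
    {Θ : Set E} (hΘ : Convex ℝ Θ) {f : Fin n → E → ℝ} {g : Fin n → E → E}
    (hg : ∀ i, ∀ x ∈ Θ, ∀ y ∈ Θ, f i x - f i y ≤ ⟪g i x, x - y⟫_ℝ)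
    {α : ℕ → ℝ} (hα : ∀ t < T, 0 < α t)
    {p w : (t : ℕ) → (Fin t → Fin n) → Fin n → ℝ}
    (hp : ∀ t s i, 0 < p t s i) (hp_sum : ∀ t s, ∑ i, p t s i = 1)
    (hw : ∀ t s i, w t s i = 1 / (n * p t s i))
    {θ : (t : ℕ) → (Fin t → Fin n) → E} (hθ : ∀ t s, θ t s ∈ Θ)
    (hproj : ∀ (t : ℕ) (s : Fin t → Fin n) (i : Fin n),
      IsMinOn (fun v => ‖v - (θ t s - (α t * w t s i) • g i (θ t s))‖) Θ (θ (t + 1) (Fin.snoc s i)))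
    {y : E} (hy : y ∈ Θ) :
    ∑ t ∈ Finset.range T, ∑ s : Fin t → Fin n, trajProb p t s *
          (1 / (n : ℝ) * ∑ i, f i (θ t s) - 1 / (n : ℝ) * ∑ i, f i y) ≤
      ∑ t ∈ Finset.range T, α t / 2 *
          (∑ s : Fin t → Fin n, trajProb p t s *
            ∑ i, p t s i * w t s i ^ 2 * ‖g i (θ t s)‖ ^ 2) +
      ∑ t ∈ Finset.range T, 1 / (2 * α t) *
          ((∑ s : Fin t → Fin n, trajProb p t s * ‖θ t s - y‖ ^ 2) -
            ∑ s : Fin t → Fin n, trajProb p t s *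
              ∑ i, p t s i * ‖θ (t + 1) (Fin.snoc s i) - y‖ ^ 2) := by
  rw [← Finset.sum_add_distrib]
  refine Finset.sum_le_sum fun t ht => ?_
  have hround : ∀ s, 1 / (n : ℝ) * ∑ i, f i (θ t s) - 1 / (n : ℝ) * ∑ i, f i y ≤
      α t / 2 * ∑ i, p t s i * w t s i ^ 2 * ‖g i (θ t s)‖ ^ 2 +
        1 / (2 * α t) * (‖θ t s - y‖ ^ 2 -
          ∑ i, p t s i * ‖θ (t + 1) (Fin.snoc s i) - y‖ ^ 2) := fun s =>
    regret_le_of_isMinOn_norm_sub (hα t (Finset.mem_range.1 ht)) n.cast_nonneg (hp t s)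
      (hp_sum t s) (hw t s) (fun i => hg i _ (hθ t s) y hy) hΘ
      (fun i => hθ (t + 1) (Fin.snoc s i)) (hproj t s) hy
  have htraj := trajProb_nonneg (fun t s i => (hp t s i).le) t
  refine (Finset.sum_le_sum fun s _ => mul_le_mul_of_nonneg_left (hround s) (htraj s)).trans_eq ?_
  rw [← Finset.sum_sub_distrib, Finset.mul_sum (a := α t / 2),
    Finset.mul_sum (a := 1 / (2 * α t)), ← Finset.sum_add_distrib]
  exact Finset.sum_congr rfl fun s _ => by ring

/-- Theorem 2 of the paper: expected regret bound for adaptive-probabilities SGD,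
valid for any trajectory of sampling probabilities.  `θpath t s` is the iterate `θ_{t+1}`
produced by the history `s = (i₁,…,i_t)`; expectations are sums weighted by `trajProb`. -/
theorem stmt_6 (d n : ℕ) (hn : 0 < n) (T : ℕ) (hT : 1 ≤ T)
    (Θ : Set (EuclideanSpace ℝ (Fin d))) (hΘconv : Convex ℝ Θ)
    (f : Fin n → EuclideanSpace ℝ (Fin d) → ℝ)
    (hconv : ∀ i, ConvexOn ℝ Set.univ (f i))
    (hdiff : ∀ i, Differentiable ℝ (f i))
    (α : ℕ → ℝ) (hα : ∀ t, 1 ≤ t → t ≤ T → 0 < α t)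
    (p : (t : ℕ) → (Fin t → Fin n) → Fin n → ℝ)
    (hp : ∀ t s i, 0 < p t s i) (hpsum : ∀ t s, ∑ i, p t s i = 1)
    (w : (t : ℕ) → (Fin t → Fin n) → Fin n → ℝ)
    (hw : ∀ t s i, w t s i = 1 / ((n : ℝ) * p t s i))
    (θ₁ : EuclideanSpace ℝ (Fin d)) (hθ₁ : θ₁ ∈ Θ)
    (θpath : (t : ℕ) → (Fin t → Fin n) → EuclideanSpace ℝ (Fin d))
    (hinit : ∀ s : Fin 0 → Fin n, θpath 0 s = θ₁)
    (hmem : ∀ t s, θpath t s ∈ Θ)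
    (hproj : ∀ (t : ℕ) (s : Fin t → Fin n) (i : Fin n), ∀ u ∈ Θ,
      ‖θpath (t + 1) (Fin.snoc s i) -
          (θpath t s - (α (t + 1) * w t s i) • gradient (f i) (θpath t s))‖ ≤
        ‖u - (θpath t s - (α (t + 1) * w t s i) • gradient (f i) (θpath t s))‖)
    (θstar : EuclideanSpace ℝ (Fin d)) (hθstar : θstar ∈ Θ) :
    -- regret: t ranges over 1..T, encoded as t = k+1 with k ∈ range T, and θ_t = θpath k
    ∑ k ∈ Finset.range T, ∑ s : Fin k → Fin n, trajProb p k s *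
          ((1 / (n : ℝ)) * ∑ i, f i (θpath k s) - (1 / (n : ℝ)) * ∑ i, f i θstar) ≤
      ∑ k ∈ Finset.range T, (α (k + 1) / 2) *
          (∑ s : Fin k → Fin n, trajProb p k s *
            ∑ i, p k s i * (w k s i) ^ 2 * ‖gradient (f i) (θpath k s)‖ ^ 2) +
      ∑ k ∈ Finset.range T, (1 / (2 * α (k + 1))) *
          ((∑ s : Fin k → Fin n, trajProb p k s * ‖θpath k s - θstar‖ ^ 2) -
           ∑ s : Fin k → Fin n, trajProb p k s *
              ∑ i, p k s i * ‖θpath (k + 1) (Fin.snoc s i) - θstar‖ ^ 2) := by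
  exact stmt_6_general hΘconv
    (fun i x _ y _ => sub_le_inner_of_convexOn_of_hasGradientWithinAt (hconv i)
      (hasGradientWithinAt_univ.2 (hdiff i x).hasGradientAt) (Set.mem_univ x) (Set.mem_univ y))
    (fun k hk => hα (k + 1) k.succ_pos hk) hp hpsum hw hmem hproj hθstar
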